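/- Assume c_NL*(q) = c₀*. Then the minimal nonlocal traveling wave 𝒲_q satisfies lim_{ξ→+∞} 𝒲_q'(ξ)/𝒲_q(ξ) = −λ₀. -/

import Mathlib

open Filter Asymptotics MeasureTheory Set

noncomputable section

/-- A continuous, nonnegative, even, compactly supported dispersal kernel of total mass 1. -/
def IsKernel (J : ℝ → ℝ) : Prop :=
  Continuous J ∧ (∀ x, 0 ≤ J x) ∧ (∀ x, J (-x) = J x) ∧
  HasCompactSupport J ∧ (∫ x, J x) = 1

/-- A nonlocal traveling wave front with speed `c` for the kernel `J` and nonlinearity `g`. -/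
def IsNLFront (J : ℝ → ℝ) (g : ℝ → ℝ) (c : ℝ) (W : ℝ → ℝ) : Prop :=
  ContDiff ℝ 1 W ∧
  (∀ ξ, (∫ y, J (ξ - y) * W y) - W ξ + c * deriv W ξ + g (W ξ) = 0) ∧
  Tendsto W atBot (nhds 1) ∧ Tendsto W atTop (nhds 0) ∧
  (∀ ξ, deriv W ξ < 0)

/-- The linearized minimal speed `c₀* = inf_{λ>0} (∫ J(x)e^{λx}dx + γ₀ - 1)/λ`. -/
noncomputable def c0star (J : ℝ → ℝ) (γ₀ : ℝ) : ℝ :=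
  sInf ((fun l : ℝ => ((∫ x, J x * Real.exp (l * x)) + γ₀ - 1) / l) '' Ioi 0)

/-!
Along a front, `ρ = W' / W` satisfies a relaxation equation
`ρ'(ξ) = ∫ k(ξ, y) (ρ(ξ) - ρ(ξ - y)) dμ(y) + o(1)` with `k(ξ, y) = W(ξ - y) / W(ξ)` and `μ` a
multiple of `J(y) dy`. A Harnack inequality for positive solutions of
`τ' ≤ A τ - μ ∗ τ` bounds the rates `k` above and below. Applied to `ρ - liminf ρ` and
`limsup ρ - ρ`, shifted to be positive, the same inequality shows that `ρ` stays near its lower and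
upper limits on arbitrarily long intervals. There `W` is nearly exponential, so both limits solve
the characteristic equation, whose only admissible root is `-λ₀`.
-/

/-! ### Harnack inequality for delay inequalities -/

section BoundedSupport

variable {μ : Measure ℝ} {R : ℝ}

lemma exists_pos_measure_Ici_ne_zero (hμ : μ (Ioi 0) ≠ 0) : ∃ a > 0, μ (Ici a) ≠ 0 := by
  contrapose! hμ
  exact measure_null_of_locally_null _ fun x (hx : 0 < x) =>
    ⟨Ici (x / 2), mem_nhdsWithin_of_mem_nhds (Ici_mem_nhds (half_lt_self hx)), hμ _ (half_pos hx)⟩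

lemma pos_of_ae_abs_le (hR : ∀ᵐ y ∂μ, |y| ≤ R) (hμ : μ (Ioi 0) ≠ 0) : 0 < R := by
  obtain ⟨y, hy, hyR⟩ := ((frequently_ae_mem_iff.2 hμ).and_eventually hR).exists
  exact lt_of_lt_of_le hy ((le_abs_self y).trans hyR)

variable [IsFiniteMeasure μ]

lemma integrable_of_ae_abs_le (hR : ∀ᵐ y ∂μ, |y| ≤ R) {g : ℝ → ℝ} (hg : Continuous g) :
    Integrable g μ := by
  obtain ⟨M, hM⟩ := (isCompact_Icc (a := -R) (b := R)).exists_bound_of_continuousOn hg.continuousOn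
  exact .of_bound hg.aestronglyMeasurable M (hR.mono fun y hy => hM y (abs_le.1 hy))

lemma hasDerivAt_integral_comp_sub (hR : ∀ᵐ y ∂μ, |y| ≤ R) {W : ℝ → ℝ} (hW : ContDiff ℝ 1 W)
    (ξ : ℝ) : HasDerivAt (fun ξ => ∫ y, W (ξ - y) ∂μ) (∫ y, deriv W (ξ - y) ∂μ) ξ := by
  have hW' : Continuous (deriv W) := hW.continuous_deriv le_rfl
  have hWc : Continuous W := hW.continuous
  obtain ⟨M, hM⟩ := (isCompact_Icc (a := ξ - 1 - R) (b := ξ + 1 + R)).exists_bound_of_continuousOn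
    hW'.continuousOn
  refine (hasDerivAt_integral_of_dominated_loc_of_deriv_le (F := fun ξ y => W (ξ - y))
    (F' := fun ξ y => deriv W (ξ - y)) (bound := fun _ => M) (Icc_mem_nhds (sub_one_lt ξ)
      (lt_add_one ξ)) (.of_forall fun x => ?_) (integrable_of_ae_abs_le hR ?_) ?_
    (hR.mono fun y hy x hx => hM _ ?_) (integrable_const M) (.of_forall fun y x _ => ?_)).2
  · exact Continuous.aestronglyMeasurable (by fun_prop)
  · fun_prop
  · exact Continuous.aestronglyMeasurable (by fun_prop)
  · exact ⟨by linarith [hx.1, (abs_le.1 hy).2], by linarith [hx.2, (abs_le.1 hy).1]⟩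
  · exact ((hW.differentiable one_ne_zero (x - y)).hasDerivAt).comp_sub_const x y

end BoundedSupport

/-- A function that is positive on `[X - R, ∞)` and satisfies `τ' ≤ A τ - μ ∗ τ` on `[X, ∞)`.
When `μ` is supported in `[-R, R]`, the inequality only involves the values on `[X - R, ∞)`. -/
structure IsDelaySubsolution (μ : Measure ℝ) (R A X : ℝ) (τ : ℝ → ℝ) : Prop where
  differentiable : Differentiable ℝ τ
  pos : ∀ ξ ≥ X - R, 0 < τ ξ
  deriv_le : ∀ ξ ≥ X, deriv τ ξ ≤ A * τ ξ - ∫ y, τ (ξ - y) ∂μ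

/-- The weighted function `e^{-Aξ} τ(ξ)`, which absorbs the zeroth-order term of `τ' ≤ A τ`. -/
def expDamp (A : ℝ) (τ : ℝ → ℝ) (ξ : ℝ) : ℝ := Real.exp (-(A * ξ)) * τ ξ

lemma hasDerivAt_expDamp {A ξ : ℝ} {τ : ℝ → ℝ} (hτ : DifferentiableAt ℝ τ ξ) :
    HasDerivAt (expDamp A τ) (Real.exp (-(A * ξ)) * (deriv τ ξ - A * τ ξ)) ξ := by
  have hexp : HasDerivAt (fun x => Real.exp (-(A * x))) (Real.exp (-(A * ξ)) * -A) ξ := by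
    simpa using ((hasDerivAt_id ξ).const_mul A).neg.exp
  exact (hexp.mul hτ.hasDerivAt).congr_deriv (by ring)

lemma le_pow_mul_of_forall_le_mul {u : ℝ → ℝ} {X h C : ℝ} (hh : 0 ≤ h) (hC : 0 ≤ C)
    (hstep : ∀ ξ ≥ X, u (ξ - h) ≤ C * u ξ) (n : ℕ) :
    ∀ ξ ≥ X + n * h, u (ξ - n * h) ≤ C ^ n * u ξ := by
  induction n with
  | zero => simp
  | succ n ih =>
    intro ξ hξ
    push_cast at hξ ⊢
    calc u (ξ - (n + 1) * h) = u (ξ - n * h - h) := by ring_nf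
      _ ≤ C * u (ξ - n * h) := hstep _ (by linarith)
      _ ≤ C * (C ^ n * u ξ) := by gcongr; exact ih ξ (by linarith)
      _ = C ^ (n + 1) * u ξ := by ring

namespace IsDelaySubsolution

variable {μ : Measure ℝ} {R A X : ℝ} {τ : ℝ → ℝ}

lemma ae_nonneg (h : IsDelaySubsolution μ R A X τ) (hR : ∀ᵐ y ∂μ, |y| ≤ R) {ξ : ℝ} (hξ : X ≤ ξ) :
    0 ≤ᵐ[μ] fun y => τ (ξ - y) :=
  hR.mono fun y hy => (h.pos _ (by linarith [(abs_le.1 hy).2])).le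

lemma antitoneOn_expDamp (h : IsDelaySubsolution μ R A X τ) (hR : ∀ᵐ y ∂μ, |y| ≤ R) :
    AntitoneOn (expDamp A τ) (Ici X) := by
  have hd := fun ξ => hasDerivAt_expDamp (A := A) (h.differentiable ξ)
  refine antitoneOn_of_hasDerivWithinAt_nonpos (convex_Ici X)
    (fun ξ _ => (hd ξ).continuousAt.continuousWithinAt) (fun ξ _ => (hd ξ).hasDerivWithinAt)
    fun ξ hξ => ?_
  have hξX : X ≤ ξ := interior_subset hξ
  have hint : 0 ≤ ∫ y, τ (ξ - y) ∂μ := integral_nonneg_of_ae (h.ae_nonneg hR hξX)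
  exact mul_nonpos_of_nonneg_of_nonpos (Real.exp_pos _).le (by linarith [h.deriv_le ξ hξX])

variable [IsFiniteMeasure μ]

-- A jump of length at least `2d` from a point of `[ξ, ξ + d]` lands left of `ξ - d`.
lemma mul_expDamp_le_integral (h : IsDelaySubsolution μ R A X τ) (hR : ∀ᵐ y ∂μ, |y| ≤ R)
    (hR₀ : 0 ≤ R) (hA : 0 ≤ A) {d ξ s : ℝ} (hξ : X + R ≤ ξ) (hs : s ∈ Icc ξ (ξ + d)) :
    μ.real (Ici (2 * d)) * (Real.exp (-(A * R)) * expDamp A τ (ξ - d)) ≤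
      Real.exp (-(A * s)) * ∫ y, τ (s - y) ∂μ := by
  have hτc := h.differentiable.continuous
  have hint : Integrable (fun y => Real.exp (-(A * s)) * τ (s - y)) μ :=
    integrable_of_ae_abs_le hR (by fun_prop)
  have hle : ∀ᵐ y ∂μ, y ∈ Ici (2 * d) → Real.exp (-(A * R)) * expDamp A τ (ξ - d) ≤
      Real.exp (-(A * s)) * τ (s - y) := by
    filter_upwards [hR] with y hyR hy
    have hyR := (abs_le.1 hyR).2
    have hy : 2 * d ≤ y := hy
    have hsX : X ≤ s - y := by linarith [hs.1]
    have hsd : s - y ≤ ξ - d := by linarith [hs.2]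
    have hpos : 0 ≤ expDamp A τ (ξ - d) :=
      mul_nonneg (Real.exp_pos _).le (h.pos _ (by linarith)).le
    calc Real.exp (-(A * R)) * expDamp A τ (ξ - d)
        ≤ Real.exp (-(A * y)) * expDamp A τ (s - y) := by
          gcongr
          exact h.antitoneOn_expDamp hR hsX (hsX.trans hsd) hsd
      _ = Real.exp (-(A * s)) * τ (s - y) := by
          rw [expDamp, ← mul_assoc, ← Real.exp_add]; ring_nf
  calc μ.real (Ici (2 * d)) * (Real.exp (-(A * R)) * expDamp A τ (ξ - d))
      = ∫ _ in Ici (2 * d), Real.exp (-(A * R)) * expDamp A τ (ξ - d) ∂μ := by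
        rw [setIntegral_const, smul_eq_mul]
    _ ≤ ∫ y in Ici (2 * d), Real.exp (-(A * s)) * τ (s - y) ∂μ :=
        setIntegral_mono_on_ae (integrable_const _) hint.integrableOn measurableSet_Ici hle
    _ ≤ ∫ y, Real.exp (-(A * s)) * τ (s - y) ∂μ := by
        refine setIntegral_le_integral hint ?_
        filter_upwards [h.ae_nonneg hR (show X ≤ s by linarith [hs.1])] with y hy
        exact mul_nonneg (Real.exp_pos _).le hy
    _ = Real.exp (-(A * s)) * ∫ y, τ (s - y) ∂μ := integral_const_mul _ _

lemma expDamp_sub_le (h : IsDelaySubsolution μ R A X τ) (hR : ∀ᵐ y ∂μ, |y| ≤ R) (hR₀ : 0 ≤ R)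
    (hA : 0 ≤ A) {d ξ : ℝ} (hd : 0 < d) (hξ : X + R ≤ ξ) :
    d * (μ.real (Ici (2 * d)) * Real.exp (-(A * R))) * expDamp A τ (ξ - d) ≤ expDamp A τ ξ := by
  have hder := fun x => hasDerivAt_expDamp (A := A) (h.differentiable x)
  obtain ⟨s, hs, hslope⟩ := exists_hasDerivAt_eq_slope (expDamp A τ) _ (lt_add_of_pos_right ξ hd)
    (fun x _ => (hder x).continuousAt.continuousWithinAt) (fun x _ => hder x)
  rw [add_sub_cancel_left, eq_div_iff hd.ne'] at hslope
  have hpos : 0 < expDamp A τ (ξ + d) := mul_pos (Real.exp_pos _) (h.pos _ (by linarith))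
  have hint := h.mul_expDamp_le_integral hR hR₀ hA hξ (Ioo_subset_Icc_self hs)
  calc d * (μ.real (Ici (2 * d)) * Real.exp (-(A * R))) * expDamp A τ (ξ - d)
      = d * (μ.real (Ici (2 * d)) * (Real.exp (-(A * R)) * expDamp A τ (ξ - d))) := by ring
    _ ≤ d * (Real.exp (-(A * s)) * ∫ y, τ (s - y) ∂μ) := by gcongr
    _ ≤ d * (Real.exp (-(A * s)) * -(deriv τ s - A * τ s)) := by
        gcongr
        linarith [h.deriv_le s (by linarith [hs.1])]
    _ = expDamp A τ ξ - expDamp A τ (ξ + d) := by linarith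
    _ ≤ expDamp A τ ξ := by linarith

end IsDelaySubsolution

lemma exists_harnack_const {μ : Measure ℝ} [IsFiniteMeasure μ] {R A : ℝ}
    (hR : ∀ᵐ y ∂μ, |y| ≤ R) (hμ : μ (Ioi 0) ≠ 0) (hA : 0 ≤ A) {T : ℝ} (hT : 0 < T) :
    ∃ D > 0, ∀ X τ, IsDelaySubsolution μ R A X τ →
      ∀ ξ ≥ X + R + T, ∀ s ∈ Icc (ξ - T) (ξ + T), τ s ≤ D * τ ξ := by
  have hR₀ := pos_of_ae_abs_le hR hμ
  obtain ⟨a, ha, hμa⟩ := exists_pos_measure_Ici_ne_zero hμ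
  obtain ⟨n, hn⟩ := exists_nat_gt (2 * T / a)
  have hn₀ : (0 : ℝ) < n := (by positivity : 0 < 2 * T / a).trans hn
  set d := T / n with hd
  have hd₀ : 0 < d := by positivity
  have hnd : n * d = T := mul_div_cancel₀ T hn₀.ne'
  have hda : 2 * d ≤ a := by
    rw [div_lt_iff₀ ha] at hn
    rw [hd, mul_div_assoc', div_le_iff₀ hn₀]
    linarith
  have hmass : 0 < μ.real (Ici (2 * d)) :=
    (measureReal_nonneg.lt_of_ne' ((measureReal_ne_zero_iff).2 hμa)).trans_le
      (measureReal_mono (Ici_subset_Ici.2 hda))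
  set m := d * (μ.real (Ici (2 * d)) * Real.exp (-(A * R)))
  have hm : 0 < m := by positivity
  refine ⟨m⁻¹ ^ n * Real.exp (A * T), by positivity, fun X τ h ξ hξ s hs => ?_⟩
  have hback : expDamp A τ (ξ - T) ≤ m⁻¹ ^ n * expDamp A τ ξ := by
    rw [← hnd]
    refine le_pow_mul_of_forall_le_mul hd₀.le (by positivity) (fun x (hx : X + R ≤ x) => ?_) n ξ
      (by linarith)
    rw [inv_mul_eq_div, le_div_iff₀' hm]
    exact h.expDamp_sub_le hR hR₀.le hA hd₀ hx
  have hτ : 0 ≤ τ ξ := (h.pos ξ (by linarith)).le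
  calc τ s = Real.exp (A * s) * expDamp A τ s := by
        rw [expDamp, ← mul_assoc, ← Real.exp_add]; simp
    _ ≤ Real.exp (A * s) * expDamp A τ (ξ - T) := by
        gcongr
        exact h.antitoneOn_expDamp hR (mem_Ici.2 (by linarith)) (mem_Ici.2 (by linarith [hs.1]))
          hs.1
    _ ≤ Real.exp (A * s) * (m⁻¹ ^ n * expDamp A τ ξ) := by gcongr
    _ = m⁻¹ ^ n * Real.exp (A * (s - ξ)) * τ ξ := by
        rw [expDamp, mul_sub, sub_eq_add_neg, Real.exp_add]; ring
    _ ≤ m⁻¹ ^ n * Real.exp (A * T) * τ ξ := by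
        gcongr
        linarith [hs.2]

/-! ### Relaxation equations -/

/-- `L` is a plateau value of `ρ` at `+∞` if `ρ` is uniformly close to `L` on arbitrarily long
intervals arbitrarily far to the right. -/
def IsPlateauValue (ρ : ℝ → ℝ) (L : ℝ) : Prop :=
  ∀ T > 0, ∀ ε > 0, ∃ᶠ ξ in atTop, ∀ s ∈ Icc (ξ - T) (ξ + T), |ρ s - L| ≤ ε

/-- The relaxation equation `ρ'(ξ) = ∫ k(ξ, y) (ρ(ξ) - ρ(ξ - y)) dμ(y) + e(ξ)` with jump rates
`k` between `κ` and `K` near `+∞` and an error `e` vanishing at `+∞`. -/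
structure IsRelaxation (μ : Measure ℝ) (R : ℝ) (κ : NNReal) (K : ℝ) (k : ℝ → ℝ → ℝ) (e ρ : ℝ → ℝ) :
    Prop where
  differentiable : Differentiable ℝ ρ
  deriv_eq : ∀ ξ, deriv ρ ξ = (∫ y, k ξ y * (ρ ξ - ρ (ξ - y)) ∂μ) + e ξ
  continuous_rate : ∀ ξ, Continuous (k ξ)
  rate_mem : ∀ᶠ ξ in atTop, ∀ y, |y| ≤ R → k ξ y ∈ Icc (κ : ℝ) K
  tendsto_error : Tendsto e atTop (nhds 0)

namespace IsRelaxation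

variable {μ : Measure ℝ} {R K L : ℝ} {κ : NNReal} {k : ℝ → ℝ → ℝ} {e ρ : ℝ → ℝ}

lemma neg (h : IsRelaxation μ R κ K k e ρ) : IsRelaxation μ R κ K k (-e) (-ρ) where
  differentiable := h.differentiable.neg
  deriv_eq ξ := by
    rw [deriv.neg, h.deriv_eq, neg_add, ← integral_neg]
    congr 2 with y
    simp only [Pi.neg_apply]
    ring
  continuous_rate := h.continuous_rate
  rate_mem := h.rate_mem
  tendsto_error := neg_zero (G := ℝ) ▸ h.tendsto_error.neg

variable [IsFiniteMeasure μ]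

lemma integral_le (h : IsRelaxation μ R κ K k e ρ) (hR : ∀ᵐ y ∂μ, |y| ≤ R) {ξ b : ℝ}
    (hk : ∀ y, |y| ≤ R → k ξ y ∈ Icc (κ : ℝ) K) (hb : ∀ y, |y| ≤ R → b ≤ ρ (ξ - y)) (hξ : b ≤ ρ ξ) :
    ∫ y, k ξ y * (ρ ξ - ρ (ξ - y)) ∂μ ≤
      K * μ.real univ * (ρ ξ - b) - κ * ∫ y, (ρ (ξ - y) - b) ∂μ := by
  have hρ := h.differentiable.continuous
  have hkc := h.continuous_rate ξ
  have hint : Integrable (fun y => κ * (ρ (ξ - y) - b)) μ :=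
    integrable_of_ae_abs_le hR (by fun_prop)
  calc ∫ y, k ξ y * (ρ ξ - ρ (ξ - y)) ∂μ
      ≤ ∫ y, (K * (ρ ξ - b) - κ * (ρ (ξ - y) - b)) ∂μ := by
        refine integral_mono_ae (integrable_of_ae_abs_le hR (by fun_prop))
          ((integrable_const _).sub hint) (hR.mono fun y hy => ?_)
        have hgain := mul_le_mul_of_nonneg_right (hk y hy).2 (sub_nonneg.2 hξ)
        have hloss := mul_le_mul_of_nonneg_right (hk y hy).1 (sub_nonneg.2 (hb y hy))
        linarith
    _ = K * μ.real univ * (ρ ξ - b) - κ * ∫ y, (ρ (ξ - y) - b) ∂μ := by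
        rw [integral_sub (integrable_const _) hint, integral_const, integral_const_mul, smul_eq_mul]
        ring

lemma eventually_isDelaySubsolution (h : IsRelaxation μ R κ K k e ρ) (hR : ∀ᵐ y ∂μ, |y| ≤ R)
    (hL : ∀ δ > 0, ∀ᶠ ξ in atTop, L - δ < ρ ξ) {δ : ℝ} (hδ : 0 < δ) :
    ∀ᶠ X in atTop, IsDelaySubsolution (κ • μ) R (K * μ.real univ + 1) X
      fun ξ => ρ ξ - (L - 2 * δ) := by
  have hlow := eventually_forall_ge_atTop.2 (hL δ hδ)
  filter_upwards [(tendsto_atTop_add_const_right _ (-R) tendsto_id).eventually hlow,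
    eventually_forall_ge_atTop.2 hlow,
    eventually_forall_ge_atTop.2 (h.tendsto_error.eventually_lt_const hδ),
    eventually_forall_ge_atTop.2 h.rate_mem] with X hXR hX he hk
  have hXR : ∀ ξ ≥ X - R, L - δ < ρ ξ := hXR
  refine ⟨h.differentiable.sub_const _, fun ξ hξ => by linarith [hXR ξ hξ], fun ξ hξ => ?_⟩
  have hρξ : L - δ < ρ ξ := hX X le_rfl ξ hξ
  have hint := h.integral_le hR (b := L - 2 * δ) (hk ξ hξ)
    (fun y hy => by linarith [hXR (ξ - y) (by linarith [(abs_le.1 hy).2])]) (by linarith)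
  rw [deriv_sub_const, h.deriv_eq, integral_smul_nnreal_measure, NNReal.smul_def, smul_eq_mul]
  linarith [he ξ hξ]

-- Harnack's inequality for `ρ - (L - 2δ)`: if it is `≤ 3δ` at `ξ`, it is `≤ 3Dδ` around `ξ`.
lemma isPlateauValue (h : IsRelaxation μ R κ K k e ρ) (hR : ∀ᵐ y ∂μ, |y| ≤ R)
    (hμ : μ (Ioi 0) ≠ 0) (hκ : 0 < κ) (hL : ∀ δ > 0, ∀ᶠ ξ in atTop, L - δ < ρ ξ)
    (hL' : ∀ δ > 0, ∃ᶠ ξ in atTop, ρ ξ < L + δ) : IsPlateauValue ρ L := by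
  intro T hT ε hε
  have hK : 0 ≤ K := by
    obtain ⟨ξ, hξ⟩ := h.rate_mem.exists
    have hmem := hξ 0 (by simpa using (pos_of_ae_abs_le hR hμ).le)
    exact κ.coe_nonneg.trans (hmem.1.trans hmem.2)
  have hκμ : (κ • μ) (Ioi 0) ≠ 0 := by simp [hκ.ne', hμ]
  obtain ⟨D, hD, hharnack⟩ := exists_harnack_const (A := K * μ.real univ + 1)
    (Measure.ae_smul_measure hR κ) hκμ (by positivity) hT
  obtain ⟨δ, hδ, hδε⟩ : ∃ δ > 0, δ * (3 * D + 1) = ε :=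
    ⟨ε / (3 * D + 1), by positivity, by field_simp⟩
  have hDδ : 0 < D * δ := by positivity
  obtain ⟨X, hX, hXL⟩ := ((h.eventually_isDelaySubsolution hR hL hδ).and
    (eventually_forall_ge_atTop.2 (hL δ hδ))).exists
  refine ((hL' δ hδ).and_eventually
    (eventually_ge_atTop (max (X + R + T) (X + T)))).mono fun ξ ⟨hξL, hξX⟩ s hs => ?_
  have hupper := hharnack X _ hX ξ (le_of_max_le_left hξX) s hs
  have hξD : D * (ρ ξ - (L - 2 * δ)) ≤ D * (3 * δ) := by
    gcongr
    linarith [hξL]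
  have hlower := hXL s (by linarith [le_of_max_le_right hξX, hs.1])
  rw [abs_le]
  constructor <;> linarith [hDδ]

lemma isPlateauValue_liminf (h : IsRelaxation μ R κ K k e ρ) (hR : ∀ᵐ y ∂μ, |y| ≤ R)
    (hμ : μ (Ioi 0) ≠ 0) (hκ : 0 < κ) (hle : IsBoundedUnder (· ≤ ·) atTop ρ)
    (hge : IsBoundedUnder (· ≥ ·) atTop ρ) : IsPlateauValue ρ (liminf ρ atTop) :=
  h.isPlateauValue hR hμ hκ
    (fun _ hδ => eventually_lt_of_lt_liminf (sub_lt_self _ hδ) hge)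
    (fun _ hδ => frequently_lt_of_liminf_lt hle.isCoboundedUnder_ge (lt_add_of_pos_right _ hδ))

lemma isPlateauValue_limsup (h : IsRelaxation μ R κ K k e ρ) (hR : ∀ᵐ y ∂μ, |y| ≤ R)
    (hμ : μ (Ioi 0) ≠ 0) (hκ : 0 < κ) (hle : IsBoundedUnder (· ≤ ·) atTop ρ)
    (hge : IsBoundedUnder (· ≥ ·) atTop ρ) : IsPlateauValue ρ (limsup ρ atTop) := by
  have hneg : IsPlateauValue (-ρ) (-limsup ρ atTop) := by
    refine h.neg.isPlateauValue hR hμ hκ (fun δ hδ => ?_) fun δ hδ => ?_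
    · filter_upwards [eventually_lt_of_limsup_lt (lt_add_of_pos_right _ hδ) hle] with ξ hξ
      simp only [Pi.neg_apply]
      linarith
    · refine (frequently_lt_of_lt_limsup hge.isCoboundedUnder_le (sub_lt_self _ hδ)).mono
        fun ξ hξ => ?_
      simp only [Pi.neg_apply]
      linarith
  refine fun T hT ε hε => (hneg T hT ε hε).mono fun ξ hξ s hs => ?_
  rw [← abs_neg]
  convert hξ s hs using 2
  simp only [Pi.neg_apply]
  ring

lemma tendsto_of_forall_isPlateauValue (h : IsRelaxation μ R κ K k e ρ)
    (hR : ∀ᵐ y ∂μ, |y| ≤ R) (hμ : μ (Ioi 0) ≠ 0) (hκ : 0 < κ)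
    (hbdd : IsBoundedUnder (· ≤ ·) atTop fun ξ => |ρ ξ|) (hL : ∀ L', IsPlateauValue ρ L' → L' = L) :
    Tendsto ρ atTop (nhds L) :=
  have ⟨hle, hge⟩ := isBoundedUnder_le_abs.1 hbdd
  tendsto_of_liminf_eq_limsup (hL _ (h.isPlateauValue_liminf hR hμ hκ hle hge))
    (hL _ (h.isPlateauValue_limsup hR hμ hκ hle hge)) hle hge

end IsRelaxation

/-! ### Logarithmic derivatives of positive solutions -/

/-- A positive `C¹` solution of the linear nonlocal equation `W' = -(μ ∗ W) - g W` on `ℝ`. -/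
structure IsPositiveSolution (μ : Measure ℝ) (g W : ℝ → ℝ) : Prop where
  contDiff : ContDiff ℝ 1 W
  pos : ∀ ξ, 0 < W ξ
  deriv_eq : ∀ ξ, deriv W ξ = -(∫ y, W (ξ - y) ∂μ) - g ξ * W ξ

lemma ratio_mem_Icc_of_abs_logDeriv_sub_le {W : ℝ → ℝ} {L ε ξ y T : ℝ} (hW : Differentiable ℝ W)
    (hpos : ∀ ξ, 0 < W ξ) (hε : 0 ≤ ε)
    (hL : ∀ s ∈ Icc (ξ - T) (ξ + T), |logDeriv W s - L| ≤ ε) (hy : |y| ≤ T) :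
    W (ξ - y) / W ξ ∈ Icc (Real.exp (-(ε * T)) * Real.exp (-(L * y)))
      (Real.exp (ε * T) * Real.exp (-(L * y))) := by
  have hderiv : ∀ s ∈ Icc (ξ - T) (ξ + T), HasDerivWithinAt (fun s => Real.log (W s) - L * s)
      (logDeriv W s - L) (Icc (ξ - T) (ξ + T)) s := fun s _ => by
    have hlog := ((hW s).hasDerivAt.log (hpos s).ne').sub ((hasDerivAt_id s).const_mul L)
    exact (hlog.congr_deriv (by rw [logDeriv_apply, mul_one])).hasDerivWithinAt
  have hy' := abs_le.1 hy
  have hlog : |Real.log (W (ξ - y)) - Real.log (W ξ) + L * y| ≤ ε * T := calc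
    _ = ‖Real.log (W (ξ - y)) - L * (ξ - y) - (Real.log (W ξ) - L * ξ)‖ := by
        rw [Real.norm_eq_abs]; ring_nf
    _ ≤ ε * ‖ξ - y - ξ‖ :=
        (convex_Icc _ _).norm_image_sub_le_of_norm_hasDerivWithin_le hderiv hL
          ⟨by linarith, by linarith⟩ ⟨by linarith, by linarith⟩
    _ ≤ ε * T := by
        gcongr
        simpa using hy
  have hratio : W (ξ - y) / W ξ = Real.exp (Real.log (W (ξ - y)) - Real.log (W ξ)) := by
    rw [Real.exp_sub, Real.exp_log (hpos _), Real.exp_log (hpos _)]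
  rw [hratio, ← Real.exp_add, ← Real.exp_add, mem_Icc, Real.exp_le_exp, Real.exp_le_exp]
  have hlog' := abs_le.1 hlog
  constructor <;> linarith

namespace IsPositiveSolution

variable {μ : Measure ℝ} {R γ L : ℝ} {g W : ℝ → ℝ}

lemma logDeriv_eq (h : IsPositiveSolution μ g W) (ξ : ℝ) :
    logDeriv W ξ = -(∫ y, W (ξ - y) / W ξ ∂μ) - g ξ := by
  rw [logDeriv_apply, h.deriv_eq, sub_div, neg_div, integral_div,
    mul_div_cancel_right₀ _ (h.pos ξ).ne']

variable [IsFiniteMeasure μ]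

lemma exists_ratio_mem_Icc (h : IsPositiveSolution μ g W) (hR : ∀ᵐ y ∂μ, |y| ≤ R)
    (hμ : μ (Ioi 0) ≠ 0) (hg : Tendsto g atTop (nhds γ)) :
    ∃ D : NNReal, 0 < D ∧ ∀ᶠ ξ in atTop, ∀ y, |y| ≤ R →
      W (ξ - y) / W ξ ∈ Icc ((D⁻¹ : NNReal) : ℝ) D := by
  have hR₀ := pos_of_ae_abs_le hR hμ
  obtain ⟨D, hD, hharnack⟩ := exists_harnack_const (A := |γ| + 1) hR hμ (by positivity) hR₀
  have hg' : ∀ᶠ ξ in atTop, -(|γ| + 1) < g ξ :=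
    hg.eventually_const_lt (by linarith [neg_abs_le γ])
  obtain ⟨X, hX⟩ := eventually_atTop.1 hg'
  have hsub : IsDelaySubsolution μ R (|γ| + 1) X W := by
    refine ⟨h.contDiff.differentiable one_ne_zero, fun ξ _ => h.pos ξ, fun ξ hξ => ?_⟩
    rw [h.deriv_eq]
    linarith [mul_le_mul_of_nonneg_right (hX ξ hξ).le (h.pos ξ).le]
  lift D to NNReal using hD.le
  refine ⟨D, mod_cast hD, (eventually_ge_atTop (X + 3 * R)).mono fun ξ hξ y hy => ?_⟩
  have hy' := abs_le.1 hy
  have hleft := hharnack X W hsub (ξ - y) (by linarith) ξ ⟨by linarith, by linarith⟩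
  have hright := hharnack X W hsub ξ (by linarith) (ξ - y) ⟨by linarith, by linarith⟩
  rw [NNReal.coe_inv, mem_Icc, div_le_iff₀ (h.pos ξ), le_div_iff₀ (h.pos ξ),
    inv_mul_le_iff₀ hD]
  exact ⟨hleft, hright⟩

lemma isBoundedUnder_abs_logDeriv (h : IsPositiveSolution μ g W) (hR : ∀ᵐ y ∂μ, |y| ≤ R)
    (hμ : μ (Ioi 0) ≠ 0) (hg : Tendsto g atTop (nhds γ)) :
    IsBoundedUnder (· ≤ ·) atTop fun ξ => |logDeriv W ξ| := by
  obtain ⟨D, -, hD⟩ := h.exists_ratio_mem_Icc hR hμ hg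
  refine isBoundedUnder_of_eventually_le (a := D * μ.real univ + (|γ| + 1)) ?_
  filter_upwards [hD, hg.abs.eventually_lt_const (lt_add_one |γ|)] with ξ hξ hgξ
  have hratio : ∀ᵐ y ∂μ, ‖W (ξ - y) / W ξ‖ ≤ D := hR.mono fun y hy => by
    simpa only [Real.norm_of_nonneg (div_pos (h.pos _) (h.pos _)).le] using (hξ y hy).2
  have hint : |∫ y, W (ξ - y) / W ξ ∂μ| ≤ D * μ.real univ :=
    Real.norm_eq_abs _ ▸ norm_integral_le_of_norm_le_const hratio
  calc |logDeriv W ξ| = |-(∫ y, W (ξ - y) / W ξ ∂μ) - g ξ| := by rw [h.logDeriv_eq]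
    _ ≤ |∫ y, W (ξ - y) / W ξ ∂μ| + |g ξ| := by
        simpa only [abs_neg] using abs_sub (-(∫ y, W (ξ - y) / W ξ ∂μ)) (g ξ)
    _ ≤ D * μ.real univ + (|γ| + 1) := by gcongr

lemma hasDerivAt_logDeriv (h : IsPositiveSolution μ g W) (hR : ∀ᵐ y ∂μ, |y| ≤ R) {ξ : ℝ}
    (hg : DifferentiableAt ℝ g ξ) :
    HasDerivAt (logDeriv W)
      ((∫ y, W (ξ - y) / W ξ * (logDeriv W ξ - logDeriv W (ξ - y)) ∂μ) - deriv g ξ) ξ := by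
  have hWc : Continuous W := h.contDiff.continuous
  have hW'c : Continuous (deriv W) := h.contDiff.continuous_deriv le_rfl
  have hlog : logDeriv W = -((fun ξ => ∫ y, W (ξ - y) ∂μ) / W) - g := by
    funext ξ
    rw [h.logDeriv_eq, integral_div, Pi.sub_apply, Pi.neg_apply, Pi.div_apply]
  have hint : ∫ y, W (ξ - y) / W ξ * (logDeriv W ξ - logDeriv W (ξ - y)) ∂μ =
      logDeriv W ξ / W ξ * (∫ y, W (ξ - y) ∂μ) - (∫ y, deriv W (ξ - y) ∂μ) / W ξ := by
    rw [← integral_const_mul, ← integral_div, ← integral_sub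
      (integrable_of_ae_abs_le hR (by fun_prop)) (integrable_of_ae_abs_le hR (by fun_prop))]
    congr 1 with y
    have hne := (h.pos (ξ - y)).ne'
    rw [logDeriv_apply W (ξ - y)]
    field_simp
  have hW := (h.contDiff.differentiable one_ne_zero ξ).hasDerivAt
  have hquot := ((hasDerivAt_integral_comp_sub hR h.contDiff ξ).div hW (h.pos ξ).ne').neg.sub
    hg.hasDerivAt
  rw [← hlog] at hquot
  refine hquot.congr_deriv ?_
  have hne := (h.pos ξ).ne'
  rw [hint, logDeriv_apply]
  field_simp
  ring

lemma isRelaxation_logDeriv (h : IsPositiveSolution μ g W) (hR : ∀ᵐ y ∂μ, |y| ≤ R)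
    (hg : Differentiable ℝ g) (hg' : Tendsto (deriv g) atTop (nhds 0)) {κ : NNReal} {K : ℝ}
    (hratio : ∀ᶠ ξ in atTop, ∀ y, |y| ≤ R → W (ξ - y) / W ξ ∈ Icc (κ : ℝ) K) :
    IsRelaxation μ R κ K (fun ξ y => W (ξ - y) / W ξ) (-deriv g) (logDeriv W) where
  differentiable ξ := (h.hasDerivAt_logDeriv hR (hg ξ)).differentiableAt
  deriv_eq ξ := (h.hasDerivAt_logDeriv hR (hg ξ)).deriv
  continuous_rate ξ := by
    have hWc := h.contDiff.continuous
    fun_prop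
  rate_mem := hratio
  tendsto_error := neg_zero (G := ℝ) ▸ hg'.neg

lemma characteristic_of_isPlateauValue (h : IsPositiveSolution μ g W) (hR : ∀ᵐ y ∂μ, |y| ≤ R)
    (hR₀ : 0 < R) (hg : Tendsto g atTop (nhds γ)) (hL : IsPlateauValue (logDeriv W) L) :
    L = -(∫ y, Real.exp (-(L * y)) ∂μ) - γ := by
  set M := ∫ y, Real.exp (-(L * y)) ∂μ with hM
  have hWc : Continuous W := h.contDiff.continuous
  have happrox : ∀ ε > 0, Real.exp (-(ε * R)) * M - 2 * ε ≤ -L - γ ∧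
      -L - γ ≤ Real.exp (ε * R) * M + 2 * ε := by
    intro ε hε
    obtain ⟨ξ, hξ, hgξ⟩ := ((hL R hR₀ ε hε).and_eventually
      (hg.eventually (Metric.closedBall_mem_nhds γ hε))).exists
    have hratio := hR.mono fun y hy => ratio_mem_Icc_of_abs_logDeriv_sub_le
      (h.contDiff.differentiable one_ne_zero) h.pos hε.le hξ hy
    have hWint : Integrable (fun y => W (ξ - y) / W ξ) μ :=
      integrable_of_ae_abs_le hR (by fun_prop)
    have hexp : ∀ c : ℝ, Integrable (fun y => c * Real.exp (-(L * y))) μ := fun c =>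
      integrable_of_ae_abs_le hR (by fun_prop)
    have hlow := integral_mono_ae (hexp _) hWint (hratio.mono fun _ => And.left)
    have hupp := integral_mono_ae hWint (hexp _) (hratio.mono fun _ => And.right)
    rw [integral_const_mul, ← hM] at hlow hupp
    have hLξ := abs_le.1 (hξ ξ ⟨by linarith, by linarith⟩)
    have hgξ : |g ξ - γ| ≤ ε := hgξ
    have hgξ := abs_le.1 hgξ
    rw [h.logDeriv_eq] at hLξ
    constructor <;> linarith
  have hlow : Tendsto (fun ε => Real.exp (-(ε * R)) * M - 2 * ε) (nhdsWithin 0 (Ioi 0)) (nhds M) :=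
    tendsto_nhdsWithin_of_tendsto_nhds (Continuous.tendsto' (by fun_prop) _ _ (by simp))
  have hupp : Tendsto (fun ε => Real.exp (ε * R) * M + 2 * ε) (nhdsWithin 0 (Ioi 0)) (nhds M) :=
    tendsto_nhdsWithin_of_tendsto_nhds (Continuous.tendsto' (by fun_prop) _ _ (by simp))
  have hle := le_of_tendsto hlow (eventually_mem_nhdsWithin.mono fun ε hε => (happrox ε hε).1)
  have hge := ge_of_tendsto hupp (eventually_mem_nhdsWithin.mono fun ε hε => (happrox ε hε).2)
  linarith

theorem tendsto_logDeriv (h : IsPositiveSolution μ g W) (hR : ∀ᵐ y ∂μ, |y| ≤ R)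
    (hμ : μ (Ioi 0) ≠ 0) (hg : Differentiable ℝ g) (hgγ : Tendsto g atTop (nhds γ))
    (hg' : Tendsto (deriv g) atTop (nhds 0))
    (huniq : ∀ L', L' = -(∫ y, Real.exp (-(L' * y)) ∂μ) - γ → L' = L) :
    Tendsto (logDeriv W) atTop (nhds L) := by
  obtain ⟨D, hD, hratio⟩ := h.exists_ratio_mem_Icc hR hμ hgγ
  exact (h.isRelaxation_logDeriv hR hg hg' hratio).tendsto_of_forall_isPlateauValue hR hμ
    (inv_pos.2 hD) (h.isBoundedUnder_abs_logDeriv hR hμ hgγ)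
    fun L' hL' => huniq L' (h.characteristic_of_isPlateauValue hR (pos_of_ae_abs_le hR hμ) hgγ hL')

end IsPositiveSolution

/-! ### Kernels and fronts -/

/-- The dispersal measure `J(y) dy / c`, for which the front equation with speed `c` reads
`W' = -(μ ∗ W) - g W`. -/
def dispersalMeasure (J : ℝ → ℝ) (c : ℝ) : Measure ℝ :=
  volume.withDensity fun y => ENNReal.ofReal (J y / c)

namespace IsKernel

variable {J : ℝ → ℝ} {c : ℝ}

lemma continuous (hJ : IsKernel J) : Continuous J := hJ.1

lemma nonneg (hJ : IsKernel J) : ∀ x, 0 ≤ J x := hJ.2.1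

lemma even (hJ : IsKernel J) : ∀ x, J (-x) = J x := hJ.2.2.1

lemma hasCompactSupport (hJ : IsKernel J) : HasCompactSupport J := hJ.2.2.2.1

lemma integral_eq_one (hJ : IsKernel J) : ∫ x, J x = 1 := hJ.2.2.2.2

lemma integrable (hJ : IsKernel J) : Integrable J :=
  hJ.continuous.integrable_of_hasCompactSupport hJ.hasCompactSupport

lemma integrable_mul (hJ : IsKernel J) {g : ℝ → ℝ} (hg : Continuous g) :
    Integrable fun x => J x * g x :=
  (hJ.continuous.mul hg).integrable_of_hasCompactSupport hJ.hasCompactSupport.mul_right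

lemma integral_mul_id (hJ : IsKernel J) : ∫ x, J x * x = 0 := by
  have hneg := integral_neg_eq_self (fun x => J x * x) volume
  simp only [hJ.even, mul_neg, integral_neg] at hneg
  linarith

lemma one_le_integral_mul_exp (hJ : IsKernel J) (l : ℝ) :
    1 ≤ ∫ x, J x * Real.exp (l * x) := by
  have hmoment : Integrable fun x => l * (J x * x) := (hJ.integrable_mul continuous_id).const_mul l
  calc 1 = ∫ x, (J x + l * (J x * x)) := by
        rw [integral_add hJ.integrable hmoment, integral_const_mul, hJ.integral_mul_id,
          hJ.integral_eq_one, mul_zero, add_zero]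
    _ ≤ ∫ x, J x * Real.exp (l * x) :=
        integral_mono (hJ.integrable.add hmoment) (hJ.integrable_mul (by fun_prop)) fun x => by
          linarith [mul_le_mul_of_nonneg_left (Real.add_one_le_exp (l * x)) (hJ.nonneg x)]

lemma mul_pos_of_characteristic (hJ : IsKernel J) {γ₀ l : ℝ} (hγ₀ : 0 < γ₀)
    (hl : (∫ x, J x * Real.exp (l * x)) - 1 + γ₀ = c * l) : 0 < c * l := by
  linarith [hJ.one_le_integral_mul_exp l]

lemma integral_dispersalMeasure (hJ : IsKernel J) (hc : 0 ≤ c) (g : ℝ → ℝ) :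
    ∫ y, g y ∂dispersalMeasure J c = (∫ y, J y * g y) / c := by
  have hmeas : Measurable fun y => ENNReal.ofReal (J y / c) :=
    (hJ.continuous.div_const c).measurable.ennreal_ofReal
  rw [dispersalMeasure, integral_withDensity_eq_integral_toReal_smul hmeas (by simp),
    ← integral_div]
  congr 1 with y
  rw [ENNReal.toReal_ofReal (div_nonneg (hJ.nonneg y) hc), smul_eq_mul, div_mul_eq_mul_div]

lemma characteristic_neg (hJ : IsKernel J) (hc : 0 < c) {γ₀ L : ℝ}
    (hL : L = -(∫ y, Real.exp (-(L * y)) ∂dispersalMeasure J c) - (γ₀ - 1) / c) :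
    (∫ x, J x * Real.exp (-L * x)) - 1 + γ₀ = c * -L := by
  rw [hJ.integral_dispersalMeasure hc.le] at hL
  field_simp at hL
  simp only [neg_mul]
  linarith

lemma isFiniteMeasure_dispersalMeasure (hJ : IsKernel J) (c : ℝ) :
    IsFiniteMeasure (dispersalMeasure J c) :=
  isFiniteMeasure_withDensity_ofReal (hJ.integrable.div_const c).2

lemma exists_ae_dispersalMeasure_abs_le (hJ : IsKernel J) (c : ℝ) :
    ∃ R, ∀ᵐ y ∂dispersalMeasure J c, |y| ≤ R := by
  obtain ⟨R, hR⟩ := hJ.hasCompactSupport.isCompact.isBounded.exists_norm_le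
  refine ⟨R, (ae_withDensity_iff (hJ.continuous.div_const c).measurable.ennreal_ofReal).2
    (.of_forall fun y hy => hR y (subset_tsupport J fun hJy => hy ?_))⟩
  rw [hJy, zero_div, ENNReal.ofReal_zero]

lemma setIntegral_Ioi (hJ : IsKernel J) : ∫ x in Ioi 0, J x = 1 / 2 := by
  have habs : ∀ x, J |x| = J x := fun x => by
    rcases abs_choice x with hx | hx <;> simp only [hx, hJ.even]
  have hhalf := integral_comp_abs (f := J)
  simp only [habs, hJ.integral_eq_one] at hhalf
  linarith

lemma dispersalMeasure_Ioi_ne_zero (hJ : IsKernel J) (hc : 0 < c) :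
    dispersalMeasure J c (Ioi 0) ≠ 0 := by
  rw [dispersalMeasure, withDensity_apply _ measurableSet_Ioi,
    ← ofReal_integral_eq_lintegral_ofReal (hJ.integrable.div_const c).integrableOn
      (.of_forall fun y => div_nonneg (hJ.nonneg y) hc.le),
    integral_div, hJ.setIntegral_Ioi, Ne, ENNReal.ofReal_eq_zero, not_le]
  positivity

end IsKernel

/-- The coefficient `g` of the front equation in the form `W' = -(μ ∗ W) - g W`. -/
def reactionCoeff (f : ℝ → ℝ) (c : ℝ) (W : ℝ → ℝ) (ξ : ℝ) : ℝ := (f (W ξ) / W ξ - 1) / c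

namespace IsNLFront

variable {J f W : ℝ → ℝ} {c : ℝ}

lemma contDiff (hW : IsNLFront J f c W) : ContDiff ℝ 1 W := hW.1

lemma front_eq (hW : IsNLFront J f c W) (ξ : ℝ) :
    (∫ y, J (ξ - y) * W y) - W ξ + c * deriv W ξ + f (W ξ) = 0 := hW.2.1 ξ

lemma tendsto_atBot (hW : IsNLFront J f c W) : Tendsto W atBot (nhds 1) := hW.2.2.1

lemma tendsto_atTop (hW : IsNLFront J f c W) : Tendsto W atTop (nhds 0) := hW.2.2.2.1

lemma deriv_neg (hW : IsNLFront J f c W) : ∀ ξ, deriv W ξ < 0 := hW.2.2.2.2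

lemma strictAnti (hW : IsNLFront J f c W) : StrictAnti W := strictAnti_of_deriv_neg hW.deriv_neg

lemma pos (hW : IsNLFront J f c W) (ξ : ℝ) : 0 < W ξ :=
  (hW.strictAnti.antitone.le_of_tendsto hW.tendsto_atTop (ξ + 1)).trans_lt
    (hW.strictAnti (lt_add_one ξ))

lemma lt_one (hW : IsNLFront J f c W) (ξ : ℝ) : W ξ < 1 :=
  (hW.strictAnti (sub_one_lt ξ)).trans_le
    (hW.strictAnti.antitone.ge_of_tendsto hW.tendsto_atBot (ξ - 1))

lemma isPositiveSolution (hW : IsNLFront J f c W) (hJ : IsKernel J) (hc : 0 < c) :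
    IsPositiveSolution (dispersalMeasure J c) (reactionCoeff f c W) W where
  contDiff := hW.contDiff
  pos := hW.pos
  deriv_eq ξ := by
    have hconv : ∫ y, J (ξ - y) * W y = ∫ y, J y * W (ξ - y) := by
      simpa only [sub_sub_cancel] using
        integral_sub_left_eq_self (fun y => J y * W (ξ - y)) volume ξ
    have heq := hW.front_eq ξ
    have hne := (hW.pos ξ).ne'
    rw [hconv] at heq
    rw [hJ.integral_dispersalMeasure hc.le, reactionCoeff]
    field_simp
    linarith

lemma tendsto_nhdsWithin (hW : IsNLFront J f c W) : Tendsto W atTop (nhdsWithin 0 (Ioo 0 1)) :=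
  tendsto_nhdsWithin_iff.2 ⟨hW.tendsto_atTop, .of_forall fun ξ => ⟨hW.pos ξ, hW.lt_one ξ⟩⟩

lemma tendsto_comp_div_self (hW : IsNLFront J f c W)
    (hf : DifferentiableWithinAt ℝ f (Icc 0 1) 0) (hf0 : f 0 = 0) :
    Tendsto (fun ξ => f (W ξ) / W ξ) atTop (nhds (derivWithin f (Icc 0 1) 0)) := by
  have hslope := (hasDerivWithinAt_iff_tendsto_slope.1 hf.hasDerivWithinAt).comp
    (hW.tendsto_nhdsWithin.mono_right (nhdsWithin_mono 0 fun w hw =>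
      (⟨Ioo_subset_Icc_self hw, hw.1.ne'⟩ : w ∈ Icc 0 1 \ {0})))
  refine hslope.congr fun ξ => ?_
  rw [Function.comp_apply, slope_def_field, hf0, sub_zero, sub_zero]

lemma tendsto_reactionCoeff (hW : IsNLFront J f c W)
    (hf : DifferentiableWithinAt ℝ f (Icc 0 1) 0) (hf0 : f 0 = 0) :
    Tendsto (reactionCoeff f c W) atTop (nhds ((derivWithin f (Icc 0 1) 0 - 1) / c)) :=
  ((hW.tendsto_comp_div_self hf hf0).sub_const 1).div_const c

lemma hasDerivAt_reactionCoeff (hW : IsNLFront J f c W) (hf : DifferentiableOn ℝ f (Icc 0 1))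
    (ξ : ℝ) : HasDerivAt (reactionCoeff f c W)
      ((derivWithin f (Icc 0 1) (W ξ) - f (W ξ) / W ξ) * logDeriv W ξ / c) ξ := by
  have hWξ : W ξ ∈ Ioo 0 1 := ⟨hW.pos ξ, hW.lt_one ξ⟩
  have hderiv := (hW.contDiff.differentiable one_ne_zero ξ).hasDerivAt
  have hfW := ((hf (W ξ) (Ioo_subset_Icc_self hWξ)).hasDerivWithinAt.hasDerivAt
    (Icc_mem_nhds hWξ.1 hWξ.2)).comp ξ hderiv
  refine (((hfW.div hderiv hWξ.1.ne').sub_const 1).div_const c).congr_deriv ?_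
  have hne := hWξ.1.ne'
  rw [logDeriv_apply, Function.comp_apply]
  field_simp

lemma tendsto_deriv_reactionCoeff (hW : IsNLFront J f c W) (hf : ContDiffOn ℝ 1 f (Icc 0 1))
    (hf0 : f 0 = 0) (hbdd : IsBoundedUnder (· ≤ ·) atTop fun ξ => |logDeriv W ξ|) :
    Tendsto (deriv (reactionCoeff f c W)) atTop (nhds 0) := by
  have hdiff := hf.differentiableOn one_ne_zero
  have h0 : (0 : ℝ) ∈ Icc 0 1 := ⟨le_rfl, zero_le_one⟩
  have hslope : Tendsto (fun ξ => derivWithin f (Icc 0 1) (W ξ)) atTop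
      (nhds (derivWithin f (Icc 0 1) 0)) :=
    (hf.continuousOn_derivWithin uniqueDiffOn_Icc_zero_one le_rfl 0 h0).tendsto.comp
      (hW.tendsto_nhdsWithin.mono_right (nhdsWithin_mono 0 Ioo_subset_Icc_self))
  have hgap := hslope.sub (hW.tendsto_comp_div_self (hdiff 0 h0) hf0)
  rw [sub_self] at hgap
  have hprod := (hgap.zero_mul_isBoundedUnder_le hbdd).div_const c
  rw [zero_div] at hprod
  exact hprod.congr fun ξ => (hW.hasDerivAt_reactionCoeff hdiff ξ).deriv.symm

end IsNLFront

theorem nonlocal_log_derivative_limit_general {J : ℝ → ℝ} (hJ : IsKernel J) {f : ℝ → ℝ}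
    {γ₀ c lam₀ : ℝ} (hf : ContDiffOn ℝ 1 f (Icc 0 1)) (hf0 : f 0 = 0) (hγ₀ : 0 < γ₀)
    (hdf0 : derivWithin f (Icc 0 1) 0 = γ₀) (hlam₀ : 0 < lam₀)
    (hroot : (∫ x, J x * Real.exp (lam₀ * x)) - 1 + γ₀ = c * lam₀)
    (huniqroot : ∀ l, 0 < l → (∫ x, J x * Real.exp (l * x)) - 1 + γ₀ = c * l → l = lam₀)
    {W : ℝ → ℝ} (hW : IsNLFront J f c W) :
    Tendsto (fun ξ => deriv W ξ / W ξ) atTop (nhds (-lam₀)) := by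
  have hc : 0 < c := pos_of_mul_pos_left (hJ.mul_pos_of_characteristic hγ₀ hroot) hlam₀.le
  have hdiff := hf.differentiableOn one_ne_zero
  have := hJ.isFiniteMeasure_dispersalMeasure c
  obtain ⟨R, hR⟩ := hJ.exists_ae_dispersalMeasure_abs_le c
  have hμ := hJ.dispersalMeasure_Ioi_ne_zero hc
  have hsol := hW.isPositiveSolution hJ hc
  have hlim : Tendsto (reactionCoeff f c W) atTop (nhds ((γ₀ - 1) / c)) :=
    hdf0 ▸ hW.tendsto_reactionCoeff (hdiff 0 ⟨le_rfl, zero_le_one⟩) hf0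
  refine hsol.tendsto_logDeriv hR hμ
    (fun ξ => (hW.hasDerivAt_reactionCoeff hdiff ξ).differentiableAt) hlim
    (hW.tendsto_deriv_reactionCoeff hf hf0 (hsol.isBoundedUnder_abs_logDeriv hR hμ hlim))
    fun L hL => ?_
  have hroot_neg := hJ.characteristic_neg hc hL
  have hL_neg : 0 < -L := pos_of_mul_pos_right (hJ.mul_pos_of_characteristic hγ₀ hroot_neg) hc.le
  exact neg_eq_iff_eq_neg.1 (huniqroot (-L) hL_neg hroot_neg)

/-- If the minimal nonlocal speed is linearly selected, then the logarithmic derivative of the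
minimal traveling wave tends to `-λ₀` at `+∞`. -/
theorem nonlocal_log_derivative_limit
    (J : ℝ → ℝ) (hJ : IsKernel J)
    (f : ℝ → ℝ) (γ₀ : ℝ)
    -- monostable condition with f'(0) = γ₀ > 0
    (hf1 : ContDiffOn ℝ 2 f (Icc 0 1)) (hf0 : f 0 = 0) (hf1' : f 1 = 0)
    (hγ₀ : 0 < γ₀) (hdf0 : derivWithin f (Icc 0 1) 0 = γ₀)
    (hdf1 : derivWithin f (Icc 0 1) 1 < 0)
    (hfpos : ∀ w ∈ Ioo (0:ℝ) 1, 0 < f w)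
    -- λ₀ is the unique positive number with ∫ J e^{λ₀ x} dx - 1 + γ₀ = c₀* λ₀
    (lam₀ : ℝ) (hlam₀ : 0 < lam₀)
    (hroot : (∫ x, J x * Real.exp (lam₀ * x)) - 1 + γ₀ = c0star J γ₀ * lam₀)
    (huniqroot : ∀ l, 0 < l →
      (∫ x, J x * Real.exp (l * x)) - 1 + γ₀ = c0star J γ₀ * l → l = lam₀)
    -- minimal speed c_NL* and its characterization; linear selection
    (cNL : ℝ) (hge : c0star J γ₀ ≤ cNL)
    (hmin : ∀ c, (∃ V : ℝ → ℝ, IsNLFront J f c V) ↔ cNL ≤ c)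
    (hlin : cNL = c0star J γ₀)
    -- the minimal traveling wave
    (W : ℝ → ℝ) (hW : IsNLFront J f cNL W) :
    Tendsto (fun ξ => deriv W ξ / W ξ) atTop (nhds (-lam₀)) := by
  subst hlin
  exact nonlocal_log_derivative_limit_general hJ (hf1.of_le one_le_two) hf0 hγ₀ hdf0 hlam₀ hroot
    huniqroot hW
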